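/- The set Ω := {w ∈ W_ext : ℓ(w) = 0} is a subgroup of W_ext, the affine Weyl group W_aff is a normal subgroup of W_ext, the multiplication map Ω × W_aff → W_ext is a bijection (so W_ext = Ω ⋉ W_aff), and conjugation by any element of Ω preserves the set S_aff (in particular ℓ(ω w ω⁻¹) = ℓ(w) for all ω ∈ Ω, w ∈ W_aff). -/

import Mathlib

open scoped Classical TensorProduct

noncomputable section

namespace SemiInf

/-- The data of a root datum together with its (finite) Weyl group:
finite-rank free `ℤ`-modules `X` and `Y` with a pairing, a finite group `W`
acting on both, a finite set of roots with a subset of positive roots, and a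
coroot map. The axioms are collected in `Ctx.IsRootDatum`. -/
structure Ctx where
  X : Type
  Y : Type
  [addX : AddCommGroup X]
  [addY : AddCommGroup Y]
  W : Type
  [grpW : Group W]
  [finW : Fintype W]
  [actX : DistribMulAction W X]
  [actY : DistribMulAction W Y]
  pair : Y →+ X →+ ℤ
  roots : Finset X
  pos : Finset X
  coroot : X → Y

attribute [instance] Ctx.addX Ctx.addY Ctx.grpW Ctx.finW Ctx.actX Ctx.actY

namespace Ctx

variable (C : Ctx)

/-- The axioms of a root datum (free finite-rank lattices, perfect pairing,
finite reduced crystallographic root system with a system of positive roots),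
with `W` its Weyl group acting faithfully on `X` and `Y`. -/
structure IsRootDatum : Prop where
  free_X : Module.Free ℤ C.X
  finite_X : Module.Finite ℤ C.X
  free_Y : Module.Free ℤ C.Y
  finite_Y : Module.Finite ℤ C.Y
  perfect_left : Function.Bijective fun y : C.Y => C.pair y
  perfect_right : Function.Bijective fun x : C.X => C.pair.flip x
  pos_subset : C.pos ⊆ C.roots
  root_decomp : ∀ α ∈ C.roots, α ∈ C.pos ∨ -α ∈ C.pos
  pos_neg_disjoint : ∀ α ∈ C.pos, -α ∉ C.pos
  zero_not_root : (0 : C.X) ∉ C.roots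
  reduced : ∀ α ∈ C.roots, ∀ n : ℤ, n • α ∈ C.roots → n = 1 ∨ n = -1
  coroot_self : ∀ α ∈ C.roots, C.pair (C.coroot α) α = 2
  isReflection : ∀ α ∈ C.roots, ∃ s : C.W,
    (∀ x : C.X, s • x = x - C.pair (C.coroot α) x • α) ∧
    (∀ y : C.Y, s • y = y - C.pair y α • C.coroot α)
  weyl_gen : ∀ w : C.W, w ∈ Subgroup.closure {s : C.W | ∃ α ∈ C.roots,
    (∀ x : C.X, s • x = x - C.pair (C.coroot α) x • α) ∧
    (∀ y : C.Y, s • y = y - C.pair y α • C.coroot α)}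
  faithful_X : ∀ w : C.W, (∀ x : C.X, w • x = x) → w = 1
  faithful_Y : ∀ w : C.W, (∀ y : C.Y, w • y = y) → w = 1
  pair_inv : ∀ (w : C.W) (y : C.Y) (x : C.X), C.pair (w • y) (w • x) = C.pair y x
  roots_stable : ∀ (w : C.W), ∀ α ∈ C.roots, w • α ∈ C.roots
  smul_coroot : ∀ (w : C.W), ∀ α ∈ C.roots, w • C.coroot α = C.coroot (w • α)
  exists_regular_X : ∃ ξ : C.X, ∀ α ∈ C.pos, 0 < C.pair (C.coroot α) ξ
  exists_regular_Y : ∃ η : C.Y, ∀ α ∈ C.pos, 0 < C.pair η α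

/-- The length function of the finite Weyl group:
`ℓ(w) = #{α ∈ 𝔯₊ : w(α) ∈ −𝔯₊}`. -/
def lenW (w : C.W) : ℕ := (C.pos.filter fun α => -(w • α) ∈ C.pos).card

/-- `w` is the longest element of the finite Weyl group iff it maps every
positive root to a negative root. -/
def IsLongest (w : C.W) : Prop := ∀ α ∈ C.pos, -(w • α) ∈ C.pos

/-- The set `Y₊` of dominant cocharacters. -/
def Ypos : Set C.Y := {l | ∀ α ∈ C.pos, 0 ≤ C.pair l α}

/-- The set `Y₊₊` of strictly dominant cocharacters. -/
def Yppos : Set C.Y := {l | ∀ α ∈ C.pos, 0 < C.pair l α}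

/-- The action of `W` on `Multiplicative Y`, as a homomorphism to `MulAut`. -/
def φext : C.W →* MulAut (Multiplicative C.Y) where
  toFun w :=
    { toFun := fun y => Multiplicative.ofAdd (w • Multiplicative.toAdd y)
      invFun := fun y => Multiplicative.ofAdd (w⁻¹ • Multiplicative.toAdd y)
      left_inv := fun y => by simp
      right_inv := fun y => by simp
      map_mul' := fun a b => by simp [smul_add] }
  map_one' := by
    apply MulEquiv.ext
    intro y
    simp
  map_mul' w₁ w₂ := by
    apply MulEquiv.ext
    intro y
    simp [mul_smul]

/-- The extended affine Weyl group `W_ext = W_f ⋉ Y`. -/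
abbrev Wext : Type := Multiplicative C.Y ⋊[C.φext] C.W

/-- The translation element `t_λ ∈ W_ext` associated with `λ ∈ Y`. -/
def t (l : C.Y) : C.Wext := SemidirectProduct.inl (Multiplicative.ofAdd l)

/-- The canonical embedding of the finite Weyl group in `W_ext`. -/
def σ (w : C.W) : C.Wext := SemidirectProduct.inr w

/-- The length function on `W_ext`, defined by
`ℓ(w t_λ) = Σ_{α ∈ 𝔯₊, w(α) ∈ 𝔯₊} |⟨λ,α⟩| + Σ_{α ∈ 𝔯₊, w(α) ∈ −𝔯₊} |1 − ⟨λ,α⟩|`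
(an element `g` of the semidirect product equals `w t_λ` for `w = g.right`
and `λ = w⁻¹ • g.left`). -/
def len (g : C.Wext) : ℕ :=
  ∑ α ∈ C.pos,
    if g.right • α ∈ C.pos
      then (C.pair (g.right⁻¹ • Multiplicative.toAdd g.left) α).natAbs
      else ((1 : ℤ) - C.pair (g.right⁻¹ • Multiplicative.toAdd g.left) α).natAbs

/-- The coroot lattice `ℤ𝔯∨ ⊆ Y`. -/
def corootLattice : AddSubgroup C.Y := AddSubgroup.closure (C.coroot '' ↑C.roots)

/-- The affine Weyl group `W_aff = W_f ⋉ ℤ𝔯∨`, as a subgroup of `W_ext`. -/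
def Waff : Subgroup C.Wext :=
  Subgroup.closure ((fun l => C.t l) '' ↑C.corootLattice ∪ Set.range C.σ)

/-- The set of elements of length `1` of `W_aff` (the simple affine
reflections). -/
def Saff : Set C.Wext := {g | g ∈ C.Waff ∧ C.len g = 1}

/-- The set `Ω` of elements of length `0` of `W_ext`. -/
def OmegaSet : Set C.Wext := {g | C.len g = 0}

/-- The Bruhat order on `W_aff`: `u ≤ v` iff some reduced expression of `v`
(as a word in `S_aff`) admits a subword which is an expression of `u`. -/
def bruhatAff (u v : C.Wext) : Prop :=
  ∃ l : List C.Wext, (∀ s ∈ l, s ∈ C.Saff) ∧ l.prod = v ∧ l.length = C.len v ∧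
    ∃ l' : List C.Wext, l'.Sublist l ∧ l'.prod = u

/-- The Bruhat order on `W_ext`, extending the Bruhat order of `W_aff` by
`ω u ≤ ω' v` iff `ω = ω'` and `u ≤ v`, for `ω, ω' ∈ Ω` and `u, v ∈ W_aff`. -/
def bruhat (x y : C.Wext) : Prop :=
  ∃ ω u v : C.Wext, ω ∈ C.OmegaSet ∧ u ∈ C.Waff ∧ v ∈ C.Waff ∧
    x = ω * u ∧ y = ω * v ∧ C.bruhatAff u v

/-- The set `W_ext⁺` of `w ∈ W_ext` such that `ℓ(t_μ w) = ℓ(t_μ) + ℓ(w)` for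
every dominant `μ`. -/
def WextPlus : Set C.Wext :=
  {w | ∀ μ ∈ C.Ypos, C.len (C.t μ * w) = C.len (C.t μ) + C.len w}

/-- The semiinfinite order on `W_ext`. -/
def siLE (w y : C.Wext) : Prop :=
  ∃ μ : C.Y, C.t μ * w ∈ C.WextPlus ∧ C.t μ * y ∈ C.WextPlus ∧
    C.bruhat (C.t μ * w) (C.t μ * y)

/-- The rational vector space `ℚ ⊗ Y`. -/
abbrev QY : Type := ℚ ⊗[ℤ] C.Y

/-- The canonical map `Y → ℚ ⊗ Y`. -/
def ι : C.Y →ₗ[ℤ] C.QY := TensorProduct.mk ℤ ℚ C.Y 1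

/-- The finite set of positive coroots. -/
def posCoroots : Finset C.Y := C.pos.image C.coroot

/-- Half the sum of the positive coroots, as an element of `ℚ ⊗ Y`. -/
def rhoCheck : C.QY := (2⁻¹ : ℚ) ⊗ₜ[ℤ] (∑ β ∈ C.posCoroots, β)

/-- The set of Kostant partitions of `v ∈ ℚ ⊗ Y`: functions
`φ : 𝔯∨₊ → ℤ≥0` with `Σ_α φ(α)·α = v`. -/
def KostantSet (v : C.QY) : Set (↥C.posCoroots → ℕ) :=
  {φ | ∑ β : ↥C.posCoroots, (φ β) • C.ι (β : C.Y) = v}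

/-- Kostant's partition function. -/
def KostantP (v : C.QY) : ℕ := (C.KostantSet v).ncard

/-- The action of `w ∈ W` on `ℚ ⊗ Y`. -/
def actQ (w : C.W) : C.QY →ₗ[ℤ] C.QY :=
  LinearMap.lTensor ℚ ((DistribMulAction.toAddMonoidHom C.Y w).toIntLinearMap)

/-- The simple roots: positive roots which are not sums of two positive
roots. -/
def simpleRoots : Finset C.X :=
  C.pos.filter fun α => ¬ ∃ β ∈ C.pos, ∃ γ ∈ C.pos, α = β + γ

end Ctx

end SemiInf

/-!
Let `W_ext` act on `ℚ ⊗ Y` by affine transformations. It permutes the hyperplanes `⟨·, β⟩ = n`, and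
twice the length of `g` is the number of pairs of a root `β` and an integer `n` such that this
hyperplane separates the antidominant alcove `A` at the origin from `g A`. The signed number
`crossing g β` of the hyperplanes parallel to `β = 0` is a cocycle, so `Ω` is the stabilizer of `A`,
and left or right multiplication by an element of `Ω` preserves the length. `W_aff` is the kernel of
`w t_λ ↦ λ mod ℤ𝔯∨`, hence normal.

For `W_ext = Ω W_aff`, choose a point of `A` and bring its image under `g` as close to it as `W_aff`
allows; a separating hyperplane could be used to reflect the image closer, so the image is in `A`.
For `Ω ∩ W_aff = 1`, the translation part `μ` of an element of the intersection lies in the coroot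
lattice and satisfies `|⟨μ, β⟩| ≤ 1` for all roots `β`, which forces `μ = 0`; what remains is an
element of `W_f` that permutes the positive roots.
-/

namespace SemiInf

open IsAddIndecomposable (baseOf)

section PositiveSystem

variable {ι R M N S : Type*} [CommRing R] [AddCommGroup M] [Module R M] [AddCommGroup N]
  [Module R N] [AddCommGroup S] [LinearOrder S] [IsOrderedAddMonoid S]
  {P : RootPairing ι R M N} {f : M →+ S}

theorem root_reflectionPerm_eq_sub [CharZero R] [P.IsCrystallographic] (i j : ι) :
    P.root (P.reflectionPerm j i) = P.root i - P.pairingIn ℤ i j • P.root j := by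
  rw [P.root_reflectionPerm, P.reflection_apply_root' ℤ]

theorem reflection_mul_self (i : ι) : P.reflection i * P.reflection i = 1 := by
  rw [← sq, P.reflection_sq]

theorem exists_root_eq_prod_reflection (l : List ι) (i : ι) :
    ∃ k, P.root k = (l.map P.reflection).prod (P.root i) ∧
      P.reflection k * (l.map P.reflection).prod = (l.map P.reflection).prod * P.reflection i := by
  induction l with
  | nil => exact ⟨i, by simp⟩
  | cons j l ih =>
    obtain ⟨k, hk, hcomm⟩ := ih
    refine ⟨P.reflectionPerm j k, ?_, ?_⟩
    · simp [P.root_reflectionPerm, hk]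
    · rw [List.map_cons, List.prod_cons, P.reflection_reflectionPerm, mul_assoc, mul_assoc,
        ← mul_assoc (P.reflection j) (P.reflection j), reflection_mul_self, one_mul, hcomm,
        mul_assoc]

theorem apply_root_pos_of_mem_baseOf [CharZero R] (hf : ∀ i, f (P.root i) ≠ 0) {j k l : ι}
    (hj : j ∈ baseOf P.root f) (hk : 0 < f (P.root k)) (h : P.root j = P.root k - P.root l) :
    0 < f (P.root l) := by
  by_contra! hl
  have hneg : P.root (P.reflectionPerm l l) = -P.root l := by simp
  have hl' : 0 < f (P.root (P.reflectionPerm l l)) := by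
    rw [hneg, map_neg, neg_pos]
    exact lt_of_le_of_ne hl (hf l)
  exact (hj.2 k hk _ hl' (by rw [h, hneg, sub_eq_add_neg])).elim (P.ne_zero k) (P.ne_zero _)

variable [Finite ι] [CharZero R] [P.IsCrystallographic]

theorem exists_mem_baseOf_pairingIn_pos {i : ι} (hi : 0 < f (P.root i)) :
    ∃ j ∈ baseOf P.root f, 0 < P.pairingIn ℤ i j := by
  by_contra! hnonpos
  suffices ∀ x ∈ AddSubmonoid.closure (P.root '' baseOf P.root f),
      ∃ n : ℤ, n ≤ 0 ∧ P.coroot' i x = n by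
    obtain ⟨n, hn, hin⟩ := this (P.root i) <| by
      rw [AddSubmonoid.closure_image_isAddIndecomposable_baseOf]
      exact AddSubmonoid.subset_closure ⟨i, hi, rfl⟩
    rw [P.root_coroot'_eq_pairing, P.pairing_same] at hin
    have : (2 : ℤ) = n := mod_cast hin
    omega
  intro x hx
  induction hx using AddSubmonoid.closure_induction with
  | mem x hx =>
    obtain ⟨j, hj, rfl⟩ := hx
    refine ⟨P.pairingIn ℤ j i, ?_, by simpa using (P.algebraMap_pairingIn ℤ j i).symm⟩
    rw [← not_lt, P.zero_lt_pairingIn_iff' ℤ, not_lt]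
    exact hnonpos j hj
  | zero => exact ⟨0, le_rfl, by simp⟩
  | add x y _ _ hx hy =>
    obtain ⟨m, hm, hxm⟩ := hx
    obtain ⟨n, hn, hyn⟩ := hy
    exact ⟨m + n, add_nonpos hm hn, by rw [map_add, hxm, hyn, Int.cast_add]⟩

variable [IsDomain R] [P.IsReduced]

theorem apply_root_reflectionPerm_pos (hf : ∀ i, f (P.root i) ≠ 0) {i j : ι}
    (hj : j ∈ baseOf P.root f) (hi : 0 < f (P.root i)) (hij : i ≠ j) :
    0 < f (P.root (P.reflectionPerm j i)) := by
  have : Module.IsReflexive R M := .of_isPerfPair P.toLinearMap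
  have : IsAddTorsionFree M := .of_isTorsionFree R M
  -- A counterexample `α` of minimal height has `⟨α, α_j∨⟩ > 0`, so that `α - α_j` is a root,
  -- and then it is a counterexample of smaller height.
  by_contra hneg
  obtain ⟨i, ⟨hi, hij, hneg⟩, hmin⟩ := (Set.toFinite {i | 0 < f (P.root i) ∧ i ≠ j ∧
    ¬ 0 < f (P.root (P.reflectionPerm j i))}).exists_minimalFor (f ∘ P.root) _ ⟨i, hi, hij, hneg⟩
  have hp : 0 < P.pairingIn ℤ i j := by
    by_contra! hp
    refine hneg ?_
    rw [root_reflectionPerm_eq_sub, map_sub, map_zsmul, sub_pos]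
    exact (smul_nonpos_of_nonpos_of_nonneg hp hj.1.le).trans_lt hi
  obtain ⟨k, hk⟩ := P.root_sub_root_mem_of_pairingIn_pos hp hij
  have hk_pos : 0 < f (P.root k) :=
    apply_root_pos_of_mem_baseOf hf hj hi (by rw [hk, sub_sub_cancel])
  have hkj : k ≠ j := by
    rintro rfl
    exact P.nsmul_notMem_range_root (n := 2) (i := k)
      ⟨i, by rw [two_nsmul, ← sub_eq_iff_eq_add, ← hk]⟩
  have hk_neg : ¬ 0 < f (P.root (P.reflectionPerm j k)) := fun h ↦
    hneg (apply_root_pos_of_mem_baseOf hf hj h (by simp [P.root_reflectionPerm, hk]))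
  have hlt : f (P.root k) < f (P.root i) := by
    rw [hk, map_sub]
    exact sub_lt_self _ hj.1
  exact hlt.not_ge (hmin ⟨hk_pos, hkj, hk_neg⟩ hlt.le)

theorem closure_reflection_image_baseOf (hf : ∀ i, f (P.root i) ≠ 0) :
    Subgroup.closure (P.reflection '' baseOf P.root f) =
      Subgroup.closure (Set.range P.reflection) := by
  refine le_antisymm (Subgroup.closure_mono (Set.image_subset_range _ _)) ?_
  set G := Subgroup.closure (P.reflection '' baseOf P.root f)
  suffices hpos : ∀ i, 0 < f (P.root i) → P.reflection i ∈ G by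
    rw [Subgroup.closure_le]
    rintro _ ⟨i, rfl⟩
    rcases (hf i).lt_or_gt with hi | hi
    · have h := hpos (P.reflectionPerm i i) (by simpa using hi)
      rwa [P.reflection_reflectionPerm, reflection_mul_self, one_mul] at h
    · exact hpos i hi
  by_contra! hex
  obtain ⟨i, ⟨hi, hiG⟩, hmin⟩ := (Set.toFinite {i | 0 < f (P.root i) ∧
    P.reflection i ∉ G}).exists_minimalFor (f ∘ P.root) _ hex
  obtain ⟨j, hj, hp⟩ := exists_mem_baseOf_pairingIn_pos hi
  have hjG : P.reflection j ∈ G := Subgroup.subset_closure ⟨j, hj, rfl⟩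
  have hpos := apply_root_reflectionPerm_pos hf hj hi (by rintro rfl; exact hiG hjG)
  have hlt : f (P.root (P.reflectionPerm j i)) < f (P.root i) := by
    rw [root_reflectionPerm_eq_sub, map_sub, map_zsmul]
    exact sub_lt_self _ (zsmul_pos hj.1 hp)
  refine hlt.not_ge (hmin ⟨hpos, fun h ↦ hiG ?_⟩ hlt.le)
  rwa [P.reflection_reflectionPerm, mul_mem_cancel_right hjG, mul_mem_cancel_left hjG] at h

theorem exists_list_prod_reflection_eq (hf : ∀ i, f (P.root i) ≠ 0) {w : M ≃ₗ[R] M}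
    (hw : w ∈ Subgroup.closure (Set.range P.reflection)) :
    ∃ l : List ι, (∀ i ∈ l, i ∈ baseOf P.root f) ∧ (l.map P.reflection).prod = w := by
  rw [← closure_reflection_image_baseOf hf] at hw
  induction hw using Subgroup.closure_induction_left with
  | one => exact ⟨[], by simp, rfl⟩
  | mul_left s hs w _ ih =>
    obtain ⟨i, hi, rfl⟩ := hs
    obtain ⟨l, hl, rfl⟩ := ih
    exact ⟨i :: l, by simpa using ⟨hi, hl⟩, by simp⟩
  | inv_mul_cancel s hs w _ ih =>
    obtain ⟨i, hi, rfl⟩ := hs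
    obtain ⟨l, hl, rfl⟩ := ih
    exact ⟨i :: l, by simpa using ⟨hi, hl⟩, by simp⟩

theorem exists_list_prod_reflection_mul_eq (hf : ∀ i, f (P.root i) ≠ 0) {j : ι}
    (hj : 0 < f (P.root j)) (l : List ι) (hl : ∀ i ∈ l, i ∈ baseOf P.root f)
    (hneg : f ((l.map P.reflection).prod (P.root j)) < 0) :
    ∃ l' : List ι, l'.length + 1 = l.length ∧ (∀ i ∈ l', i ∈ baseOf P.root f) ∧
      (l'.map P.reflection).prod = (l.map P.reflection).prod * P.reflection j := by
  induction l with
  | nil => exact absurd hneg (by simpa using hj.le)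
  | cons i l ih =>
    obtain ⟨hi, hl_base⟩ := List.forall_mem_cons.mp hl
    obtain ⟨k, hk, hcomm⟩ := exists_root_eq_prod_reflection (P := P) l j
    rcases (hf k).lt_or_gt with hk_neg | hk_pos
    · obtain ⟨l', hlen, hl', hprod⟩ := ih hl_base (hk ▸ hk_neg)
      exact ⟨i :: l', by simp [hlen], List.forall_mem_cons.mpr ⟨hi, hl'⟩,
        by simp [hprod, mul_assoc]⟩
    · have hki : k = i := by
        by_contra hki
        have h := apply_root_reflectionPerm_pos hf hi hk_pos hki
        rw [P.root_reflectionPerm, hk] at h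
        exact h.not_gt (by simpa using hneg)
      subst hki
      refine ⟨l, rfl, hl_base, ?_⟩
      rw [List.map_cons, List.prod_cons, mul_assoc, ← hcomm, ← mul_assoc, reflection_mul_self,
        one_mul]

theorem eq_one_of_forall_apply_root_pos (hf : ∀ i, f (P.root i) ≠ 0) {w : M ≃ₗ[R] M}
    (hw : w ∈ Subgroup.closure (Set.range P.reflection))
    (hpos : ∀ i, 0 < f (P.root i) → 0 < f (w (P.root i))) : w = 1 := by
  obtain ⟨l, hl, rfl⟩ := exists_list_prod_reflection_eq hf hw
  clear hw
  induction hn : l.length using Nat.strong_induction_on generalizing l with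
  | _ n ih =>
    rcases List.eq_nil_or_concat l with rfl | ⟨l, j, rfl⟩
    · rfl
    · simp only [List.concat_eq_append, List.mem_append, List.mem_singleton] at hl
      have hj : 0 < f (P.root j) := (hl j (.inr rfl)).1
      have hneg : f ((l.map P.reflection).prod (P.root j)) < 0 := by
        simpa [map_neg] using hpos j hj
      obtain ⟨l', hlen, hl', hprod⟩ :=
        exists_list_prod_reflection_mul_eq hf hj l (fun i hi ↦ hl i (.inl hi)) hneg
      have hconcat : (l'.map P.reflection).prod = ((l.concat j).map P.reflection).prod := by
        simp [hprod]
      rw [← hconcat] at hpos ⊢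
      exact ih l'.length (by simp at hn; omega) l' hl' hpos rfl

end PositiveSystem

section CorootForm

variable {ι R M N : Type*} [CommRing R] [AddCommGroup M] [Module R M]
  [AddCommGroup N] [Module R N] (P : RootPairing ι R M N)

theorem root'_coreflection (i j : ι) (x : N) :
    P.root' j (P.coreflection i x) = P.root' (P.reflectionPerm i j) x := by
  simp [RootPairing.root', P.root_reflectionPerm, P.coreflection_apply, P.reflection_apply,
    mul_comm]

section Fintype

variable [Fintype ι]

theorem corootForm_coroot_self_mul_root' (i : ι) (x : N) :
    P.CorootForm (P.coroot i) (P.coroot i) * P.root' i x = 2 * P.CorootForm (P.coroot i) x := by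
  have h := congrArg (P.toLinearMap · x) (P.corootForm_self_smul_root i)
  rwa [map_smul, map_nsmul, P.toLinearMap_apply_CoPolarization, LinearMap.smul_apply,
    LinearMap.smul_apply, smul_eq_mul, nsmul_eq_mul, Nat.cast_ofNat] at h

theorem corootForm_sub_smul_coroot_self (i : ι) (x : N) (c : R) :
    P.CorootForm (x - c • P.coroot i) (x - c • P.coroot i) = P.CorootForm x x +
      c * (c - P.root' i x) * P.CorootForm (P.coroot i) (P.coroot i) := by
  have hsymm : P.CorootForm x (P.coroot i) = P.CorootForm (P.coroot i) x :=
    P.flip.rootForm_symmetric.eq _ _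
  have h := corootForm_coroot_self_mul_root' P i x
  simp only [map_sub, map_smul, LinearMap.sub_apply, LinearMap.smul_apply, smul_eq_mul, hsymm]
  linear_combination c * h

theorem two_mul_corootForm_sum_coroot (l : List ι) (x : N) :
    2 * P.CorootForm (l.map P.coroot).sum x =
      (l.map fun i ↦ P.CorootForm (P.coroot i) (P.coroot i) * P.root' i x).sum := by
  induction l with
  | nil => simp
  | cons i l ih =>
    rw [List.map_cons, List.map_cons, List.sum_cons, List.sum_cons, map_add, LinearMap.add_apply,
      mul_add, ih, corootForm_coroot_self_mul_root']

theorem corootForm_self_le_sub_smul_coroot_self_iff [LinearOrder R] [IsStrictOrderedRing R]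
    (i : ι) (x : N) (c : R) :
    P.CorootForm x x ≤ P.CorootForm (x - c • P.coroot i) (x - c • P.coroot i) ↔
      0 ≤ c * (c - P.root' i x) := by
  have hpos : 0 < P.CorootForm (P.coroot i) (P.coroot i) :=
    P.flip.rootForm_pos_of_ne_zero (Submodule.subset_span ⟨i, rfl⟩) (P.flip.ne_zero i)
  rw [corootForm_sub_smul_coroot_self, le_add_iff_nonneg_right, mul_nonneg_iff_of_pos_right hpos]

end Fintype

theorem sum_coroot_eq_zero_of_nonpos [Finite ι] [LinearOrder R] [IsStrictOrderedRing R] (l : List ι)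
    (hl : ∀ i ∈ l, P.root' i (l.map P.coroot).sum ≤ 0) : (l.map P.coroot).sum = 0 := by
  have := Fintype.ofFinite ι
  have hspan : (l.map P.coroot).sum ∈ P.corootSpan R := by
    refine list_sum_mem fun _ h ↦ ?_
    obtain ⟨i, -, rfl⟩ := List.mem_map.mp h
    exact Submodule.subset_span ⟨i, rfl⟩
  have hself : 2 * P.CorootForm (l.map P.coroot).sum (l.map P.coroot).sum ≤ 0 := by
    rw [two_mul_corootForm_sum_coroot]
    refine (List.sum_le_card_nsmul _ 0 fun _ h ↦ ?_).trans_eq (smul_zero _)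
    obtain ⟨i, hi, rfl⟩ := List.mem_map.mp h
    exact mul_nonpos_of_nonneg_of_nonpos (P.flip.zero_le_rootForm _) (hl i hi)
  exact P.flip.eq_zero_of_mem_rootSpan_of_rootForm_self_eq_zero hspan
    (le_antisymm (nonpos_of_mul_nonpos_right hself two_pos) (P.flip.zero_le_rootForm _))

end CorootForm

section Integral

variable {ι M N : Type*} [AddCommGroup M] [AddCommGroup N]
  (P : RootPairing ι ℤ M N)

theorem exists_mem_forall_corootForm_self_le [Fintype ι] {s : Set N} (hs : s.Nonempty) :
    ∃ x ∈ s, ∀ y ∈ s, P.CorootForm x x ≤ P.CorootForm y y := by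
  obtain ⟨x, hx, hmin⟩ := exists_minimalFor_of_wellFoundedLT (· ∈ s)
    (fun y ↦ (P.CorootForm y y).toNat) hs
  refine ⟨x, hx, fun y hy ↦ ?_⟩
  by_contra! hlt
  have hlt' : (P.CorootForm y y).toNat < (P.CorootForm x x).toNat :=
    (Int.toNat_lt_toNat ((P.flip.zero_le_rootForm y).trans_lt hlt)).mpr hlt
  exact (hmin hy hlt'.le).not_gt hlt'

variable [Finite ι]

theorem sum_coroot_eq_zero_of_abs_root'_le_one (l : List ι)
    (hl : ∀ i, |P.root' i (l.map P.coroot).sum| ≤ 1) : (l.map P.coroot).sum = 0 := by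
  induction hn : l.length generalizing l with
  | zero => simp [List.length_eq_zero_iff.mp hn]
  | succ n ih =>
    by_contra hne
    obtain ⟨i, hi, hpos⟩ : ∃ i ∈ l, 0 < P.root' i (l.map P.coroot).sum := by
      by_contra! h
      exact hne (sum_coroot_eq_zero_of_nonpos P l h)
    have hone : P.root' i (l.map P.coroot).sum = 1 :=
      le_antisymm (abs_le.mp (hl i)).2 hpos
    -- Removing a coroot that pairs to `1` with the sum is a reflection, so the bound persists.
    have herase : ((l.erase i).map P.coroot).sum = (l.map P.coroot).sum - P.coroot i := by
      rw [← List.sum_map_erase P.coroot hi, add_sub_cancel_left]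
    have hrefl : ((l.erase i).map P.coroot).sum = P.coreflection i (l.map P.coroot).sum := by
      rw [herase, P.coreflection_apply, hone, one_smul]
    have hzero : ((l.erase i).map P.coroot).sum = 0 := by
      refine ih _ (fun j ↦ ?_) (by rw [List.length_erase_of_mem hi, hn, Nat.add_sub_cancel])
      rw [hrefl, root'_coreflection]
      exact hl _
    rw [herase, sub_eq_zero] at hzero
    rw [hzero, P.root'_coroot_eq_pairing, P.pairing_same] at hone
    omega

theorem eq_zero_of_mem_closure_coroot_of_abs_root'_le_one {x : N}
    (hx : x ∈ AddSubgroup.closure (Set.range P.coroot)) (habs : ∀ i, |P.root' i x| ≤ 1) :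
    x = 0 := by
  have hneg : -Set.range P.coroot = Set.range P.coroot :=
    Set.ext fun _ ↦ P.flip.neg_mem_range_root_iff
  rw [← AddSubgroup.mem_toAddSubmonoid, AddSubgroup.closure_toAddSubmonoid, hneg,
    Set.union_self] at hx
  obtain ⟨s, hs, rfl⟩ := AddSubmonoid.exists_list_of_mem_closure hx
  obtain ⟨l, rfl⟩ : s ∈ Set.range (List.map P.coroot) := by
    rwa [Set.range_list_map]
  exact sum_coroot_eq_zero_of_abs_root'_le_one P l habs

end Integral
section Reduced

variable {ι M N : Type*} [AddCommGroup M] [AddCommGroup N] [IsAddTorsionFree M]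
  {P : RootPairing ι ℤ M N}

theorem isReduced_of_forall_zsmul_root
    (hP : ∀ i j, ∀ n : ℤ, P.root j = n • P.root i → n = 1 ∨ n = -1) : P.IsReduced := by
  refine ⟨fun i j hdep ↦ ?_⟩
  have hi : P.pairing j i • P.root i = (2 : ℤ) • P.root j :=
    P.pairing_smul_root_eq_of_not_linearIndependent hdep
  have hj : P.pairing i j • P.root j = (2 : ℤ) • P.root i :=
    P.pairing_smul_root_eq_of_not_linearIndependent (by rwa [LinearIndependent.pair_symm_iff])
  have hmul : P.pairing j i * P.pairing i j = 4 := by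
    simpa using congrArg (P.coroot' j) hi
  have hcases : P.pairing j i = 1 * 2 ∨ P.pairing j i = -1 * 2 ∨ P.pairing j i = 2 * 2 ∨
      P.pairing j i = -2 * 2 ∨ P.pairing i j = 2 * 2 ∨ P.pairing i j = -2 * 2 := by
    have hdvd : P.pairing j i ∣ 4 := ⟨_, hmul.symm⟩
    have hle := Int.le_of_dvd four_pos hdvd
    have hge := neg_le.mp (Int.le_of_dvd four_pos (neg_dvd.mpr hdvd))
    generalize P.pairing j i = p at *
    interval_cases p <;> omega
  have cancel {x y : M} {p n : ℤ} (hp : p = n * 2) (h : p • x = (2 : ℤ) • y) : y = n • x :=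
    (zsmul_right_injective two_ne_zero (by simpa [hp, mul_comm n, mul_smul] using h)).symm
  rcases hcases with h | h | h | h | h | h
  · exact .inl (by simpa using (cancel h hi).symm)
  · exact .inr (by simp [cancel h hi])
  · simpa using hP i j 2 (cancel h hi)
  · simpa using hP i j (-2) (cancel h hi)
  · simpa using hP j i 2 (cancel h hj)
  · simpa using hP j i (-2) (cancel h hj)

end Reduced

namespace Ctx

variable {C : Ctx}

/-- The pairing of a root datum as a bilinear map with `X` as its first argument, which is the
order used by `RootPairing`. -/
def bilin (C : Ctx) : C.X →ₗ[ℤ] C.Y →ₗ[ℤ] ℤ :=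
  LinearMap.mk₂ ℤ (fun x y ↦ C.pair y x) (by simp) (by simp) (by simp) (by simp)

namespace IsRootDatum

theorem isPerfPair_bilin (h : C.IsRootDatum) : C.bilin.IsPerfPair where
  bijective_left :=
    (addMonoidHomLequivInt (B := ℤ) (A := C.Y) ℤ).bijective.comp h.perfect_right
  bijective_right :=
    (addMonoidHomLequivInt (B := ℤ) (A := C.X) ℤ).bijective.comp h.perfect_left

theorem coroot_injOn (h : C.IsRootDatum) : Set.InjOn C.coroot C.roots := by
  have := h.free_X
  have : IsAddTorsionFree C.X := .of_isTorsionFree ℤ C.X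
  have mapsTo {α : C.X} (hα : α ∈ C.roots) :
      Set.MapsTo (Module.preReflection α (C.bilin.flip (C.coroot α))) C.roots C.roots := by
    intro β hβ
    obtain ⟨s, hs, -⟩ := h.isReflection α hα
    have := h.roots_stable s β hβ
    rwa [hs] at this
  intro α hα β hβ heq
  refine Module.eq_of_mapsTo_reflection_of_mem C.roots.finite_toSet (h.coroot_self α hα)
    (h.coroot_self β hβ) ?_ ?_ (mapsTo hα) (mapsTo hβ) hβ
  · rw [← heq]; exact h.coroot_self α hα
  · rw [heq]; exact h.coroot_self β hβ

/-- The root pairing underlying a root datum. -/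
def rootPairing (h : C.IsRootDatum) : RootPairing C.roots ℤ C.X C.Y :=
  have := h.free_X
  have := h.isPerfPair_bilin
  RootPairing.mk' C.bilin (.subtype _) ⟨fun α ↦ C.coroot α, h.coroot_injOn.injective⟩
    (fun α ↦ h.coroot_self α α.2)
    (by
      rintro α _ ⟨β, rfl⟩
      obtain ⟨s, hs, -⟩ := h.isReflection α α.2
      exact ⟨⟨s • β, h.roots_stable s β β.2⟩, hs β⟩)
    (by
      rintro α _ ⟨β, rfl⟩
      obtain ⟨s, -, hs⟩ := h.isReflection α α.2
      exact ⟨⟨s • β, h.roots_stable s β β.2⟩, (h.smul_coroot s β β.2).symm.trans (hs _)⟩)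

theorem isReduced_rootPairing (h : C.IsRootDatum) : h.rootPairing.IsReduced :=
  have := h.free_X
  have : IsAddTorsionFree C.X := .of_isTorsionFree ℤ C.X
  isReduced_of_forall_zsmul_root fun α β n hβ ↦ h.reduced α α.2 n (hβ ▸ β.2)

theorem toModuleAut_mem_closure_reflection (h : C.IsRootDatum) (w : C.W) :
    DistribMulAction.toModuleAut ℤ C.X w ∈
      Subgroup.closure (Set.range h.rootPairing.reflection) := by
  rw [← Subgroup.mem_comap]
  refine (Subgroup.closure_le _).mpr ?_ (h.weyl_gen w)
  rintro s ⟨α, hα, hs, -⟩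
  exact Subgroup.subset_closure ⟨⟨α, hα⟩, LinearEquiv.ext fun x ↦ (hs x).symm⟩

theorem pair_ne_zero_of_forall_pos {η : C.Y} (h : C.IsRootDatum)
    (hη : ∀ α ∈ C.pos, 0 < C.pair η α) {α : C.X} (hα : α ∈ C.roots) : C.pair η α ≠ 0 := by
  rcases h.root_decomp α hα with hpos | hneg
  · exact (hη α hpos).ne'
  · have := hη _ hneg
    rw [map_neg] at this
    omega

theorem pair_pos_iff_mem_pos {η : C.Y} (h : C.IsRootDatum)
    (hη : ∀ α ∈ C.pos, 0 < C.pair η α) {α : C.X} (hα : α ∈ C.roots) :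
    0 < C.pair η α ↔ α ∈ C.pos := by
  refine ⟨fun hpos ↦ (h.root_decomp α hα).resolve_right fun hneg ↦ ?_, hη α⟩
  have := hη _ hneg
  rw [map_neg] at this
  omega

theorem eq_one_of_forall_smul_mem_pos (h : C.IsRootDatum) {w : C.W}
    (hw : ∀ α ∈ C.pos, w • α ∈ C.pos) : w = 1 := by
  have := h.isReduced_rootPairing
  obtain ⟨η, hη⟩ := h.exists_regular_Y
  have hone : DistribMulAction.toModuleAut ℤ C.X w = 1 :=
    eq_one_of_forall_apply_root_pos (f := C.pair η) (fun α ↦ h.pair_ne_zero_of_forall_pos hη α.2)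
      (h.toModuleAut_mem_closure_reflection w)
      fun α hα ↦ hη _ (hw α ((h.pair_pos_iff_mem_pos hη α.2).mp hα))
  exact h.faithful_X w fun x ↦ LinearEquiv.congr_fun hone x

end IsRootDatum

/-- The translation part of an element of `W_ext = W_f ⋉ Y`: its value at the origin, when
`W_ext` acts on `Y` by affine transformations. -/
def translation (g : C.Wext) : C.Y := Multiplicative.toAdd g.left

@[simp]
theorem translation_one : translation (1 : C.Wext) = 0 := rfl

theorem translation_mul (g k : C.Wext) :
    translation (g * k) = translation g + g.right • translation k := rfl

theorem translation_t_mul_σ (l : C.Y) (w : C.W) : translation (C.t l * C.σ w) = l := by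
  rw [translation_mul]
  exact (congrArg (l + ·) (smul_zero _)).trans (add_zero l)

theorem right_t_mul_σ (l : C.Y) (w : C.W) : (C.t l * C.σ w).right = w := one_mul w

theorem ext_translation {g k : C.Wext} (htrans : translation g = translation k)
    (hright : g.right = k.right) : g = k :=
  SemidirectProduct.ext htrans hright

/-- The indicator function of the positive roots, with values in `ℤ`. -/
def posIndicator (β : C.X) : ℤ := if β ∈ C.pos then 1 else 0

/-- The signed number of hyperplanes `⟨·, β⟩ = n`, with `n ∈ ℤ`, that separate an alcove from its
image under `g`. The alcove is the antidominant one at the origin, on which the integer part of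
`⟨·, β⟩` is `-1` for positive `β` and `0` for negative `β`. -/
def crossing (g : C.Wext) (β : C.X) : ℤ :=
  C.pair (translation g) β + posIndicator β - posIndicator (g.right⁻¹ • β)

@[simp]
theorem crossing_one (β : C.X) : crossing (1 : C.Wext) β = 0 := by simp [crossing]

namespace IsRootDatum

theorem pair_smul_left (h : C.IsRootDatum) (w : C.W) (y : C.Y) (x : C.X) :
    C.pair (w • y) x = C.pair y (w⁻¹ • x) := by
  rw [← h.pair_inv w y, smul_inv_smul]

theorem neg_mem_roots (h : C.IsRootDatum) {α : C.X} (hα : α ∈ C.roots) : -α ∈ C.roots := by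
  obtain ⟨s, hs, -⟩ := h.isReflection α hα
  have hsα : s • α = -α := by
    rw [hs, h.coroot_self α hα, two_smul, sub_add_cancel_left]
  exact hsα ▸ h.roots_stable s α hα

theorem posIndicator_neg (h : C.IsRootDatum) {β : C.X} (hβ : β ∈ C.roots) :
    posIndicator (-β) = 1 - posIndicator β := by
  by_cases hpos : β ∈ C.pos
  · simp [posIndicator, hpos, h.pos_neg_disjoint β hpos]
  · simp [posIndicator, hpos, (h.root_decomp β hβ).resolve_left hpos]

theorem crossing_mul (h : C.IsRootDatum) (g k : C.Wext) (β : C.X) :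
    crossing (g * k) β = crossing g β + crossing k (g.right⁻¹ • β) := by
  simp only [crossing, translation_mul, map_add, AddMonoidHom.add_apply, h.pair_smul_left,
    SemidirectProduct.mul_right, mul_inv_rev, mul_smul]
  ring

theorem crossing_neg (h : C.IsRootDatum) (g : C.Wext) {β : C.X} (hβ : β ∈ C.roots) :
    crossing g (-β) = -crossing g β := by
  simp only [crossing, smul_neg, h.posIndicator_neg hβ,
    h.posIndicator_neg (h.roots_stable g.right⁻¹ β hβ), map_neg]
  ring

theorem sum_roots_smul {M : Type*} [AddCommMonoid M] (h : C.IsRootDatum) (w : C.W)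
    (F : C.X → M) : ∑ β ∈ C.roots, F (w • β) = ∑ β ∈ C.roots, F β :=
  Finset.sum_nbij' (w • ·) (w⁻¹ • ·) (h.roots_stable w) (h.roots_stable w⁻¹)
    (fun β _ ↦ inv_smul_smul w β) (fun β _ ↦ smul_inv_smul w β) (fun _ _ ↦ rfl)

theorem roots_eq_pos_union_neg (h : C.IsRootDatum) :
    C.roots = C.pos ∪ C.pos.map (Equiv.neg C.X) := by
  ext β
  simp only [Finset.mem_union, Finset.mem_map_equiv, Equiv.neg_symm, Equiv.neg_apply]
  refine ⟨h.root_decomp β, ?_⟩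
  rintro (hβ | hβ)
  · exact h.pos_subset hβ
  · exact neg_neg β ▸ h.neg_mem_roots (h.pos_subset hβ)

theorem sum_roots_of_even {M : Type*} [AddCommMonoid M] (h : C.IsRootDatum) {F : C.X → M}
    (hF : ∀ β ∈ C.pos, F (-β) = F β) :
    ∑ β ∈ C.roots, F β = 2 • ∑ β ∈ C.pos, F β := by
  have hdisj : Disjoint C.pos (C.pos.map (Equiv.neg C.X).toEmbedding) := by
    simpa [Finset.disjoint_left, Finset.mem_map_equiv] using h.pos_neg_disjoint
  rw [h.roots_eq_pos_union_neg, Finset.sum_union hdisj, Finset.sum_map, two_nsmul]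
  exact congrArg _ (Finset.sum_congr rfl hF)

theorem two_mul_len (h : C.IsRootDatum) (g : C.Wext) :
    2 * C.len g = ∑ β ∈ C.roots, (crossing g β).natAbs := by
  rw [← h.sum_roots_smul g.right, h.sum_roots_of_even, smul_eq_mul, len]
  · congr 1
    refine Finset.sum_congr rfl fun α hα ↦ ?_
    rw [← translation, crossing, ← inv_inv g.right, ← h.pair_smul_left, inv_inv, inv_smul_smul]
    simp only [posIndicator, if_pos hα]
    split_ifs <;> omega
  · intro β hβ
    rw [smul_neg, h.crossing_neg g (h.roots_stable _ β (h.pos_subset hβ)), Int.natAbs_neg]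

theorem mem_OmegaSet_iff (h : C.IsRootDatum) {g : C.Wext} :
    g ∈ C.OmegaSet ↔ ∀ β ∈ C.roots, crossing g β = 0 := by
  have hlen : g ∈ C.OmegaSet ↔ 2 * C.len g = 0 := by simp [OmegaSet]
  simp [hlen, h.two_mul_len]

theorem len_mul_of_mem_OmegaSet_left (h : C.IsRootDatum) {ω : C.Wext} (hω : ω ∈ C.OmegaSet)
    (g : C.Wext) : C.len (ω * g) = C.len g := by
  refine mul_left_cancel₀ two_ne_zero ?_
  rw [h.two_mul_len, h.two_mul_len, ← h.sum_roots_smul ω.right⁻¹ fun β ↦ (crossing g β).natAbs]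
  refine Finset.sum_congr rfl fun β hβ ↦ ?_
  rw [h.crossing_mul, h.mem_OmegaSet_iff.mp hω β hβ, zero_add]

theorem len_mul_of_mem_OmegaSet_right (h : C.IsRootDatum) (g : C.Wext) {ω : C.Wext}
    (hω : ω ∈ C.OmegaSet) : C.len (g * ω) = C.len g := by
  refine mul_left_cancel₀ two_ne_zero ?_
  rw [h.two_mul_len, h.two_mul_len]
  refine Finset.sum_congr rfl fun β hβ ↦ ?_
  rw [h.crossing_mul, h.mem_OmegaSet_iff.mp hω _ (h.roots_stable _ β hβ), add_zero]

/-- The set `Ω` of elements of length `0` as a subgroup of `W_ext`. -/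
def Omega (h : C.IsRootDatum) : Subgroup C.Wext where
  carrier := C.OmegaSet
  one_mem' := h.mem_OmegaSet_iff.mpr fun β _ ↦ crossing_one β
  mul_mem' ha hb := (h.len_mul_of_mem_OmegaSet_left ha _).trans hb
  inv_mem' {a} ha := by
    change C.len a⁻¹ = 0
    rw [← h.len_mul_of_mem_OmegaSet_left ha, mul_inv_cancel]
    exact h.mem_OmegaSet_iff.mpr fun β _ ↦ crossing_one β

theorem len_conj_of_mem_Omega (h : C.IsRootDatum) {ω : C.Wext} (hω : ω ∈ h.Omega) (g : C.Wext) :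
    C.len (ω * g * ω⁻¹) = C.len g := by
  rw [h.len_mul_of_mem_OmegaSet_right _ (h.Omega.inv_mem hω), h.len_mul_of_mem_OmegaSet_left hω]

end IsRootDatum

theorem coroot_mem_corootLattice {α : C.X} (hα : α ∈ C.roots) : C.coroot α ∈ C.corootLattice :=
  AddSubgroup.subset_closure ⟨α, hα, rfl⟩

namespace IsRootDatum

theorem sub_smul_mem_corootLattice (h : C.IsRootDatum) (w : C.W) (y : C.Y) :
    y - w • y ∈ C.corootLattice := by
  induction h.weyl_gen w using Subgroup.closure_induction generalizing y with
  | mem s hs =>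
    obtain ⟨α, hα, -, hs⟩ := hs
    rw [hs, sub_sub_cancel]
    exact zsmul_mem (coroot_mem_corootLattice hα) _
  | one => simp
  | mul v w _ _ hv hw =>
    rw [mul_smul, ← sub_add_sub_cancel y (w • y)]
    exact add_mem (hw y) (hv (w • y))
  | inv w _ hw => simpa using neg_mem (hw (w⁻¹ • y))

/-- The homomorphism from `W_ext` to the quotient of `Y` by the coroot lattice that sends
`w t_λ` to the class of `λ`. -/
def translationClass (h : C.IsRootDatum) : C.Wext →* Multiplicative (C.Y ⧸ C.corootLattice) where
  toFun g := .ofAdd (translation g)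
  map_one' := rfl
  map_mul' g k := by
    rw [← ofAdd_add, translation_mul, ← QuotientAddGroup.mk_add]
    refine congrArg Multiplicative.ofAdd (QuotientAddGroup.eq_iff_sub_mem.mpr ?_)
    rw [add_sub_add_left_eq_sub, ← neg_sub]
    exact neg_mem (h.sub_smul_mem_corootLattice _ _)

theorem mem_ker_translationClass (h : C.IsRootDatum) {g : C.Wext} :
    g ∈ h.translationClass.ker ↔ translation g ∈ C.corootLattice :=
  QuotientAddGroup.eq_zero_iff _

theorem ker_translationClass (h : C.IsRootDatum) : h.translationClass.ker = C.Waff := by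
  refine le_antisymm (fun g hg ↦ ?_) ((Subgroup.closure_le _).mpr ?_)
  · rw [← SemidirectProduct.inl_left_mul_inr_right g]
    exact mul_mem
      (Subgroup.subset_closure (.inl ⟨translation g, h.mem_ker_translationClass.mp hg, rfl⟩))
      (Subgroup.subset_closure (.inr ⟨g.right, rfl⟩))
  · rintro _ (⟨l, hl, rfl⟩ | ⟨w, rfl⟩)
    · exact h.mem_ker_translationClass.mpr hl
    · exact h.mem_ker_translationClass.mpr (zero_mem _)

theorem normal_Waff (h : C.IsRootDatum) : C.Waff.Normal :=
  h.ker_translationClass ▸ h.translationClass.normal_ker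

theorem mem_Waff_iff (h : C.IsRootDatum) {g : C.Wext} :
    g ∈ C.Waff ↔ translation g ∈ C.corootLattice := by
  rw [← h.ker_translationClass, h.mem_ker_translationClass]

end IsRootDatum

/-- `N` times the image under `g` of the point `-η / N` of `ℚ ⊗ Y`. If `η` is strictly dominant
and `N` is large, then `-η / N` lies in the antidominant alcove at the origin; scaling by `N`
keeps the computation inside `Y`. -/
def orbitPoint (η : C.Y) (N : ℤ) (g : C.Wext) : C.Y := N • translation g - g.right • η

theorem orbitPoint_mul (η : C.Y) (N : ℤ) (g k : C.Wext) :
    orbitPoint η N (g * k) = N • translation g + g.right • orbitPoint η N k := by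
  rw [orbitPoint, orbitPoint, translation_mul, SemidirectProduct.mul_right, smul_add, smul_sub,
    mul_smul, smul_comm N, add_sub_assoc]

namespace IsRootDatum

theorem exists_bounded_regular (h : C.IsRootDatum) :
    ∃ (η : C.Y) (N : ℤ), ∀ α ∈ C.pos, C.pair η α ∈ Set.Ioo 0 N := by
  obtain ⟨η, hη⟩ := h.exists_regular_Y
  refine ⟨η, ∑ α ∈ C.pos, C.pair η α + 1, fun α hα ↦ ⟨hη α hα, Int.lt_add_one_of_le ?_⟩⟩
  exact Finset.single_le_sum (f := fun α ↦ C.pair η α) (fun β hβ ↦ (hη β hβ).le) hα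

theorem exists_mem_Waff_orbitPoint_mul_eq (h : C.IsRootDatum) (η : C.Y) (N n : ℤ) {α : C.X}
    (hα : α ∈ C.roots) : ∃ a ∈ C.Waff, ∀ g : C.Wext, orbitPoint η N (a * g) =
      orbitPoint η N g - (C.pair (orbitPoint η N g) α - n * N) • C.coroot α := by
  obtain ⟨s, -, hs⟩ := h.isReflection α hα
  refine ⟨C.t (n • C.coroot α) * C.σ s, h.mem_Waff_iff.mpr ?_, fun g ↦ ?_⟩
  · rw [translation_t_mul_σ]
    exact zsmul_mem (coroot_mem_corootLattice hα) n
  · rw [orbitPoint_mul, translation_t_mul_σ, right_t_mul_σ, hs, sub_smul, mul_comm n, mul_smul]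
    abel

theorem crossing_eq_zero_of_pair_orbitPoint_mem (h : C.IsRootDatum) {η : C.Y} {N : ℤ}
    (hη : ∀ α ∈ C.pos, C.pair η α ∈ Set.Ioo 0 N) {g : C.Wext} {β : C.X} (hβ : β ∈ C.pos)
    (hg : C.pair (orbitPoint η N g) β ∈ Set.Icc (-N) 0) : crossing g β = 0 := by
  have hpair : C.pair (orbitPoint η N g) β =
      N * C.pair (translation g) β - C.pair η (g.right⁻¹ • β) := by
    simp [orbitPoint, h.pair_smul_left]
  rw [hpair] at hg
  obtain ⟨hge, hle⟩ := hg
  simp only [crossing, posIndicator, if_pos hβ]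
  by_cases hpos : g.right⁻¹ • β ∈ C.pos
  · obtain ⟨hη_pos, hη_lt⟩ := hη _ hpos
    have : C.pair (translation g) β = 0 := by
      apply le_antisymm <;> by_contra! <;> nlinarith
    simp [hpos, this]
  · have hneg : -(g.right⁻¹ • β) ∈ C.pos :=
      (h.root_decomp _ (h.roots_stable _ β (h.pos_subset hβ))).resolve_left hpos
    obtain ⟨hη_pos, hη_lt⟩ := hη _ hneg
    rw [map_neg] at hη_pos hη_lt
    have : C.pair (translation g) β = -1 := by
      apply le_antisymm <;> by_contra! <;> nlinarith
    simp [hpos, this]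

theorem exists_mem_Waff_mul_mem_OmegaSet (h : C.IsRootDatum) (g : C.Wext) :
    ∃ a ∈ C.Waff, a * g ∈ C.OmegaSet := by
  obtain ⟨η, N, hη⟩ := h.exists_bounded_regular
  -- Move the image of `-η / N` as close to `-η / N` as `W_aff` allows: no hyperplane can then
  -- separate the two points, as reflecting in it would bring them closer.
  obtain ⟨_, ⟨a, ha, rfl⟩, hmin⟩ := exists_mem_forall_corootForm_self_le h.rootPairing
    (s := (fun a ↦ orbitPoint η N (a * g) + η) '' C.Waff) ⟨_, 1, one_mem _, rfl⟩
  rw [Set.forall_mem_image] at hmin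
  have hreflect {β : C.X} (hβ : β ∈ C.roots) (n : ℤ) :
      0 ≤ (C.pair (orbitPoint η N (a * g)) β - n * N) * (-(n * N) - C.pair η β) := by
    obtain ⟨r, hr, horbit⟩ := h.exists_mem_Waff_orbitPoint_mul_eq η N n hβ
    have hle := hmin (mul_mem hr ha)
    rw [mul_assoc, horbit, sub_add_eq_add_sub] at hle
    have hnonneg :=
      (corootForm_self_le_sub_smul_coroot_self_iff h.rootPairing ⟨β, hβ⟩ _ _).mp hle
    have hroot : h.rootPairing.root' ⟨β, hβ⟩ (orbitPoint η N (a * g) + η) =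
        C.pair (orbitPoint η N (a * g)) β + C.pair η β := by
      rw [map_add]; rfl
    rw [hroot] at hnonneg
    linear_combination hnonneg
  have hcrossing {β : C.X} (hβ : β ∈ C.pos) : crossing (a * g) β = 0 := by
    obtain ⟨hη_pos, hη_lt⟩ := hη β hβ
    have h_zero := hreflect (h.pos_subset hβ) 0
    have h_neg_one := hreflect (h.pos_subset hβ) (-1)
    exact h.crossing_eq_zero_of_pair_orbitPoint_mem hη hβ ⟨by nlinarith, by nlinarith⟩
  refine ⟨a, ha, h.mem_OmegaSet_iff.mpr fun β hβ ↦ ?_⟩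
  rcases h.root_decomp β hβ with hpos | hneg
  · exact hcrossing hpos
  · simpa [h.crossing_neg _ hβ] using hcrossing hneg

open scoped Pointwise in
theorem Omega_mul_Waff (h : C.IsRootDatum) :
    (h.Omega : Set C.Wext) * (C.Waff : Set C.Wext) = Set.univ := by
  refine Set.eq_univ_of_forall fun g ↦ ?_
  obtain ⟨a, ha, hω⟩ := h.exists_mem_Waff_mul_mem_OmegaSet g⁻¹
  exact ⟨_, h.Omega.inv_mem hω, a, ha, by group⟩

theorem pair_translation_of_mem_OmegaSet (h : C.IsRootDatum) {g : C.Wext} (hg : g ∈ C.OmegaSet)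
    {β : C.X} (hβ : β ∈ C.roots) :
    C.pair (translation g) β = posIndicator (g.right⁻¹ • β) - posIndicator β := by
  have := h.mem_OmegaSet_iff.mp hg β hβ
  rw [crossing] at this
  omega

theorem abs_pair_translation_le_one (h : C.IsRootDatum) {g : C.Wext} (hg : g ∈ C.OmegaSet)
    {β : C.X} (hβ : β ∈ C.roots) : |C.pair (translation g) β| ≤ 1 := by
  rw [h.pair_translation_of_mem_OmegaSet hg hβ, posIndicator, posIndicator]
  split_ifs <;> simp

theorem translation_eq_zero_of_mem_OmegaSet_of_mem_Waff (h : C.IsRootDatum) {g : C.Wext}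
    (hΩ : g ∈ C.OmegaSet) (hW : g ∈ C.Waff) : translation g = 0 := by
  have hlattice := h.mem_Waff_iff.mp hW
  rw [corootLattice, Set.image_eq_range] at hlattice
  exact eq_zero_of_mem_closure_coroot_of_abs_root'_le_one h.rootPairing hlattice
    fun β ↦ h.abs_pair_translation_le_one hΩ β.2

theorem disjoint_Omega_Waff (h : C.IsRootDatum) : Disjoint h.Omega C.Waff := by
  refine Subgroup.disjoint_def.mpr fun {g} hΩ hW ↦ ?_
  have htrans := h.translation_eq_zero_of_mem_OmegaSet_of_mem_Waff hΩ hW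
  have hright : g.right⁻¹ = 1 := by
    refine h.eq_one_of_forall_smul_mem_pos fun β hβ ↦ ?_
    by_contra hneg
    have := h.pair_translation_of_mem_OmegaSet hΩ (h.pos_subset hβ)
    simp [htrans, posIndicator, hβ, hneg] at this
  exact ext_translation htrans (inv_eq_one.mp hright)

theorem isComplement'_Omega_Waff (h : C.IsRootDatum) : h.Omega.IsComplement' C.Waff :=
  Subgroup.isComplement'_of_disjoint_and_mul_eq_univ h.disjoint_Omega_Waff h.Omega_mul_Waff

theorem conj_mem_Saff (h : C.IsRootDatum) {ω s : C.Wext} (hω : ω ∈ h.Omega) (hs : s ∈ C.Saff) :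
    ω * s * ω⁻¹ ∈ C.Saff :=
  ⟨h.normal_Waff.conj_mem s hs.1 ω, (h.len_conj_of_mem_Omega hω s).trans hs.2⟩

end IsRootDatum

end Ctx

end SemiInf

/-- `Ω = {w : ℓ(w) = 0}` is a subgroup of `W_ext`, `W_aff` is normal in
`W_ext`, multiplication `Ω × W_aff → W_ext` is a bijection, and conjugation by
any element of `Ω` preserves `S_aff` (in particular it preserves the length of
elements of `W_aff`). -/
theorem statement10 (C : SemiInf.Ctx) (h : C.IsRootDatum) :
    ((1 : C.Wext) ∈ C.OmegaSet ∧
      (∀ a ∈ C.OmegaSet, ∀ b ∈ C.OmegaSet, a * b ∈ C.OmegaSet) ∧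
      (∀ a ∈ C.OmegaSet, a⁻¹ ∈ C.OmegaSet)) ∧
    (∀ g : C.Wext, ∀ a ∈ C.Waff, g * a * g⁻¹ ∈ C.Waff) ∧
    Function.Bijective
      (fun p : C.OmegaSet × C.Waff => (p.1 : C.Wext) * (p.2 : C.Wext)) ∧
    (∀ ω ∈ C.OmegaSet, ∀ s ∈ C.Saff, ω * s * ω⁻¹ ∈ C.Saff) ∧
    (∀ ω ∈ C.OmegaSet, ∀ w ∈ C.Waff, C.len (ω * w * ω⁻¹) = C.len w) :=
  ⟨⟨h.Omega.one_mem, fun _ ha _ hb ↦ h.Omega.mul_mem ha hb, fun _ ha ↦ h.Omega.inv_mem ha⟩,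
    fun g a ha ↦ h.normal_Waff.conj_mem a ha g,
    h.isComplement'_Omega_Waff,
    fun _ hω _ hs ↦ h.conj_mem_Saff hω hs,
    fun _ hω w _ ↦ h.len_conj_of_mem_Omega hω w⟩
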